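/- arXiv:2109.02101 — 3 statements merged into one kernel-verified Lean document; each statement's English description precedes it below -/
import Mathlib

section
/- Let H be a connected filtered k-Hopf algebra with antipode S and filtration (H_{≤0}, H_{≤1}, H_{≤2}, …). Let p be a positive integer such that (id − S²)(H_{≤p}) = 0, where S² = S ∘ S. Then: (a) for any integer u > p, we have (id − S²)^{u−p}(H_{≤u}) ⊆ Prim H and ((id + S) ∘ (id − S²)^{u−p})(H_{≤u}) = 0; (b) for any integer u ≥ p, we have (id − S²)^{u−p+1}(H_{≤u}) = 0. Here powers denote composition powers. -/
/-!
Write `e = id - S²`. The antipode is an anti-coalgebra map (`comul_comp_antipode`), so `S²` is a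
coalgebra map and `Δ ∘ e ^ m = E ^ m ∘ Δ`, where `E = id ⊗ id - S² ⊗ S² = e ⊗ id + S² ⊗ e`
(`comul_pow_apply`). The two summands of `E` commute, so `E ^ m` is a combination of the maps
`S^(2(m-l)) e ^ l ⊗ e ^ (m-l)`.

The annihilation statement is proved by strong induction on `u`, in the form: `e ^ l` kills
`H_{≤u}` as soon as `l ≥ 1` and `u < p + l`. For `u > p` and `m = u - p`, the induction hypothesis
and `p > 0` show that `E ^ m` kills every `H_{≤i} ⊗ H_{≤u-i}` with `0 < i < u`. The two extreme
terms are controlled by connectedness (`H_{≤0} = k · 1`) together with `e 1 = 0` and `ε ∘ e = 0`.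
Hence `e ^ m x` is primitive for `x ∈ H_{≤u}` (`mem_primitives_of_vanishing`). As `S` negates
primitive elements, `(id + S) (e ^ m x) = 0`, and
`e ^ (m + 1) x = (id - S) ((id + S) (e ^ m x)) = 0`, which closes the induction.
-/

open TensorProduct

/-- The image of `A ⊗ B` under the canonical map `A ⊗ B → H ⊗ H` obtained by tensoring
the inclusion maps. -/
noncomputable def tmulImage {k H : Type*} [CommRing k] [AddCommGroup H] [Module k H]
    (A B : Submodule k H) : Submodule k (H ⊗[k] H) :=
  LinearMap.range (TensorProduct.mapIncl A B)

/-- The submodule of primitive elements of `H` (with respect to the unity `one`):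
those `x` with `Δ x = x ⊗ one + one ⊗ x`. -/
noncomputable def primitives (k : Type*) (H : Type*) [CommRing k] [AddCommGroup H]
    [Module k H] [Coalgebra k H] (one : H) : Submodule k H :=
  LinearMap.ker (Coalgebra.comul (R := k) - (TensorProduct.mk k H H).flip one
    - TensorProduct.mk k H H one)

open Coalgebra WithConv HopfAlgebra

section AntiCoalgebra

variable {k H : Type*} [CommRing k] [Ring H] [HopfAlgebra k H]

/-- The antipode is an anti-coalgebra map. In the convolution algebra `Hom(H, H ⊗ H)` the
comultiplication is `ι₁ * ι₂`, with `ι₁`, `ι₂` the two inclusions, and `Δ ∘ S` is a right inverse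
of it, while `(S ⊗ S) ∘ comm ∘ Δ = (ι₂ ∘ S) * (ι₁ ∘ S)` is a left inverse. -/
theorem comul_comp_antipode :
    (comul : H →ₗ[k] H ⊗[k] H) ∘ₗ antipode k =
      TensorProduct.map (antipode k) (antipode k) ∘ₗ
        (TensorProduct.comm k H H).toLinearMap ∘ₗ comul := by
  set i₁ : H →ₐ[k] H ⊗[k] H := Algebra.TensorProduct.includeLeft
  set i₂ : H →ₐ[k] H ⊗[k] H := Algebra.TensorProduct.includeRight
  have hδ : toConv (comul : H →ₗ[k] H ⊗[k] H) =
      toConv i₁.toLinearMap * toConv i₂.toLinearMap := by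
    ext x
    rw [(ℛ k x).convMul_apply]
    simp [i₁, i₂, (ℛ k x).eq]
  have hG : toConv (TensorProduct.map (antipode k) (antipode k) ∘ₗ
        (TensorProduct.comm k H H).toLinearMap ∘ₗ (comul : H →ₗ[k] H ⊗[k] H)) =
      toConv (i₂.toLinearMap ∘ₗ antipode k) * toConv (i₁.toLinearMap ∘ₗ antipode k) := by
    ext x
    rw [(ℛ k x).convMul_apply]
    simp [i₁, i₂, ← (ℛ k x).eq]
  have hinv : ∀ i : H →ₐ[k] H ⊗[k] H,
      toConv (i.toLinearMap ∘ₗ antipode k) * toConv i.toLinearMap = 1 := by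
    intro i
    have h := LinearMap.algHom_comp_convMul_distrib i (toConv (antipode k)) (toConv LinearMap.id)
    rw [LinearMap.antipode_mul_id] at h
    apply WithConv.ofConv_injective
    rw [← (show _ = (toConv (i.toLinearMap ∘ₗ antipode k) * toConv i.toLinearMap).ofConv from h)]
    ext x
    simp [LinearMap.convOne_def]
  apply WithConv.toConv_injective
  refine (left_inv_eq_right_inv (a := toConv (comul : H →ₗ[k] H ⊗[k] H)) ?_
    LinearMap.comul_right_inv).symm
  rw [hG, hδ, mul_assoc, ← mul_assoc (toConv (i₁.toLinearMap ∘ₗ antipode k)), hinv, one_mul, hinv]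

theorem comul_antipode_sq (x : H) :
    comul (R := k) (((antipode k : Module.End k H) ^ 2) x) =
      TensorProduct.map ((antipode k : Module.End k H) ^ 2) ((antipode k : Module.End k H) ^ 2)
        (comul x) := by
  have h : ∀ y : H, comul (R := k) (antipode k y) =
      TensorProduct.map (antipode k) (antipode k) (TensorProduct.comm k H H (comul y)) :=
    fun y => LinearMap.congr_fun comul_comp_antipode y
  rw [pow_two, Module.End.mul_apply, h, h]
  generalize (comul x : H ⊗[k] H) = t
  induction t with
  | zero => simp
  | add a b ha hb => simp only [map_add, ha, hb]
  | tmul a b => simp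

/-- The endomorphism `E = e ⊗ id + S² ⊗ e = id ⊗ id - S² ⊗ S²` of `H ⊗ H`, with `e = id - S²`.
When `S` is the antipode, `Δ ∘ e = E ∘ Δ`. -/
noncomputable def tensorDiff (S : Module.End k H) : Module.End k (H ⊗[k] H) :=
  TensorProduct.map (1 - S ^ 2) 1 + TensorProduct.map (S ^ 2) (1 - S ^ 2)

theorem comul_pow_apply (S : Module.End k H) (hS : S = antipode k) (m : ℕ) (x : H) :
    comul (R := k) (((1 - S ^ 2 : Module.End k H) ^ m) x) = (tensorDiff S ^ m) (comul x) := by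
  induction m generalizing x with
  | zero => simp
  | succ m ih =>
    rw [pow_succ, Module.End.mul_apply, ih, pow_succ (tensorDiff S), Module.End.mul_apply]
    congr 1
    rw [LinearMap.sub_apply, map_sub, hS, comul_antipode_sq, tensorDiff]
    generalize (comul x : H ⊗[k] H) = t
    induction t with
    | zero => simp
    | add a b ha hb =>
      have := congrArg₂ (· + ·) ha hb
      simp only [map_add, LinearMap.add_apply] at this ⊢
      rw [← this]; abel
    | tmul a b => simp [TensorProduct.sub_tmul, TensorProduct.tmul_sub]

theorem tensorDiff_pow_tmul (S : Module.End k H) (m : ℕ) (a b : H) :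
    (tensorDiff S ^ m) (a ⊗ₜ[k] b) =
      ∑ l ∈ Finset.range (m + 1), (m.choose l) •
        (((S ^ 2) ^ (m - l)) (((1 - S ^ 2 : Module.End k H) ^ l) a) ⊗ₜ[k]
          ((1 - S ^ 2 : Module.End k H) ^ (m - l)) b) := by
  have hc : Commute (1 - S ^ 2) (S ^ 2) := (Commute.one_left _).sub_left (Commute.refl _)
  have hcomm : Commute (TensorProduct.map (1 - S ^ 2) (1 : Module.End k H))
      (TensorProduct.map (S ^ 2) (1 - S ^ 2)) := by
    rw [Commute, SemiconjBy, ← TensorProduct.map_mul, ← TensorProduct.map_mul, hc.eq, one_mul,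
      mul_one]
  rw [tensorDiff, hcomm.add_pow, LinearMap.sum_apply]
  refine Finset.sum_congr rfl fun l _ => ?_
  rw [(Nat.cast_commute _ _).eq.symm, ← nsmul_eq_mul, LinearMap.smul_apply,
    TensorProduct.map_pow, TensorProduct.map_pow, ← TensorProduct.map_mul, TensorProduct.map_tmul,
    (hc.pow_pow l (m - l)).eq, one_pow, one_mul, Module.End.mul_apply]

theorem pow_one_eq_zero (S : Module.End k H) (hS : S = antipode k) {m : ℕ} (hm : 0 < m) :
    ((1 - S ^ 2 : Module.End k H) ^ m) (1 : H) = 0 := by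
  obtain ⟨n, rfl⟩ := Nat.exists_eq_succ_of_ne_zero hm.ne'
  rw [pow_succ, Module.End.mul_apply]
  simp [hS, pow_two]

theorem counit_pow_eq_zero (S : Module.End k H) (hS : S = antipode k) {m : ℕ} (hm : 0 < m)
    (x : H) : counit (R := k) (((1 - S ^ 2 : Module.End k H) ^ m) x) = 0 := by
  obtain ⟨n, rfl⟩ := Nat.exists_eq_succ_of_ne_zero hm.ne'
  rw [pow_succ', Module.End.mul_apply]
  simp [hS, pow_two]

theorem add_antipode_eq_zero (S : Module.End k H) (hS : S = antipode k) {x : H}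
    (hx : x ∈ primitives k H 1) (hε : counit (R := k) x = 0) : x + S x = 0 := by
  have h : comul (R := k) x = x ⊗ₜ[k] (1 : H) + (1 : H) ⊗ₜ[k] x := by
    have h' : comul (R := k) x - x ⊗ₜ[k] (1 : H) - (1 : H) ⊗ₜ[k] x = 0 := hx
    rw [sub_sub, sub_eq_zero] at h'
    exact h'
  have h2 := mul_antipode_rTensor_comul_apply (R := k) x
  rw [h, hε] at h2
  simpa [hS, add_comm] using h2

/-- The key step. The hypothesis `hvan` is the annihilation statement in all degrees below
`p + m`. -/
theorem mem_primitives_of_vanishing (F : ℕ → Submodule k H)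
    (hcomulF : ∀ n : ℕ, Submodule.map (comul (R := k) (A := H)) (F n) ≤
      ∑ i ∈ Finset.range (n + 1), tmulImage (F i) (F (n - i)))
    (hF0 : ∀ a ∈ F 0, a = counit (R := k) a • (1 : H))
    (S : Module.End k H) (hS : S = antipode k) {p m : ℕ} (hp : 0 < p) (hm : 0 < m)
    (hvan : ∀ n < p + m, ∀ l, 0 < l → n < p + l → ∀ x ∈ F n, ((1 - S ^ 2 : Module.End k H) ^ l) x = 0)
    {x : H} (hx : x ∈ F (p + m)) : ((1 - S ^ 2 : Module.End k H) ^ m) x ∈ primitives k H 1 := by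
  -- Both sides of `E ^ m t = 1 ⊗ e ^ m ((ε ⊗ id) t) + e ^ m ((id ⊗ ε) t) ⊗ 1` are linear in `t`;
  -- for `t = Δ x` the equation says that `e ^ m x` is primitive.
  let R : Module.End k (H ⊗[k] H) :=
    TensorProduct.mk k H H 1 ∘ₗ ((1 - S ^ 2 : Module.End k H) ^ m : Module.End k H) ∘ₗ
      (TensorProduct.lid k H).toLinearMap ∘ₗ (counit (R := k) (A := H)).rTensor H +
    (TensorProduct.mk k H H).flip 1 ∘ₗ ((1 - S ^ 2 : Module.End k H) ^ m : Module.End k H) ∘ₗ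
      (TensorProduct.rid k H).toLinearMap ∘ₗ (counit (R := k) (A := H)).lTensor H
  have hR : ∀ a b : H, R (a ⊗ₜ[k] b) =
      (1 : H) ⊗ₜ[k] (counit (R := k) a • ((1 - S ^ 2 : Module.End k H) ^ m) b) +
        (counit (R := k) b • ((1 - S ^ 2 : Module.End k H) ^ m) a) ⊗ₜ[k] (1 : H) := by
    intro a b
    simp [R, TensorProduct.smul_tmul']
  have hone : ∀ {l}, 0 < l → ((1 - S ^ 2 : Module.End k H) ^ l) (1 : H) = 0 := pow_one_eq_zero S hS
  have hSone : ∀ l, ((S ^ 2) ^ l) (1 : H) = 1 := by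
    intro l
    induction l with
    | zero => simp
    | succ l ih => rw [pow_succ, Module.End.mul_apply, pow_two]; simpa [hS, pow_two] using ih
  have hpure : ∀ i j, i + j = p + m → ∀ a ∈ F i, ∀ b ∈ F j,
      (tensorDiff S ^ m - R) (a ⊗ₜ[k] b) = 0 := by
    intro i j hij a ha b hb
    rw [LinearMap.sub_apply, sub_eq_zero, hR, tensorDiff_pow_tmul]
    rcases Nat.eq_zero_or_pos i with rfl | hi
    · rw [hF0 a ha, Finset.sum_eq_single_of_mem 0 (by simp)]
      · simp [hone hm, hSone, TensorProduct.smul_tmul]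
      · intro l _ hl
        simp [hone (Nat.pos_of_ne_zero hl)]
    rcases Nat.eq_zero_or_pos j with rfl | hj
    · rw [hF0 b hb, Finset.sum_eq_single_of_mem m (by simp)]
      · simp [hone hm, TensorProduct.smul_tmul]
      · intro l hl hlm
        have : 0 < m - l := by have := Finset.mem_range.mp hl; omega
        simp [hone this]
    rw [hvan i (by omega) m hm (by omega) a ha, hvan j (by omega) m hm (by omega) b hb]
    simp only [smul_zero, TensorProduct.tmul_zero, TensorProduct.zero_tmul, add_zero]
    refine Finset.sum_eq_zero fun l hl => ?_
    have hl' := Finset.mem_range.mp hl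
    -- At least one tensor factor is killed: otherwise `p > 0` would force `i + j > p + m`.
    by_cases h1 : 0 < l ∧ i < p + l
    · simp [hvan i (by omega) l h1.1 h1.2 a ha]
    · have h2 : 0 < m - l ∧ j < p + (m - l) := by omega
      simp [hvan j (by omega) (m - l) h2.1 h2.2 b hb]
  have hle : ∑ i ∈ Finset.range (p + m + 1), tmulImage (F i) (F (p + m - i)) ≤
      LinearMap.ker (tensorDiff S ^ m - R) := by
    refine Finset.sum_induction _ (fun Q => Q ≤ LinearMap.ker (tensorDiff S ^ m - R))
      (fun A B hA hB => sup_le hA hB) bot_le fun i hi => ?_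
    have hi' := Finset.mem_range.mp hi
    rintro _ ⟨t, rfl⟩
    induction t with
    | zero => simp
    | add a b ha hb => rw [map_add]; exact Submodule.add_mem _ ha hb
    | tmul a b => exact hpure i (p + m - i) (by omega) a a.2 b b.2
  have hker : (tensorDiff S ^ m - R) (comul x) = 0 :=
    hle (hcomulF _ (Submodule.mem_map_of_mem hx))
  rw [LinearMap.sub_apply, sub_eq_zero, ← comul_pow_apply S hS] at hker
  change comul (R := k) (((1 - S ^ 2 : Module.End k H) ^ m) x) - (((1 - S ^ 2 : Module.End k H) ^ m) x) ⊗ₜ[k] (1 : H) -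
    (1 : H) ⊗ₜ[k] (((1 - S ^ 2 : Module.End k H) ^ m) x) = 0
  rw [hker]
  simp [R]

end AntiCoalgebra

theorem stmt_15 {k H : Type*} [CommRing k] [Ring H] [HopfAlgebra k H]
    (F : ℕ → Submodule k H)
    (hmono : Monotone F)
    (hunion : ∀ x : H, ∃ n, x ∈ F n)
    (hcomulF : ∀ n : ℕ, Submodule.map (Coalgebra.comul (R := k) (A := H)) (F n) ≤
      ∑ i ∈ Finset.range (n + 1), tmulImage (F i) (F (n - i)))
    (hmulF : ∀ i j : ℕ, ∀ a ∈ F i, ∀ b ∈ F j, a * b ∈ F (i + j))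
    (honeF : (1 : H) ∈ F 0)
    (hconn : Function.Bijective fun x : F 0 => Coalgebra.counit (R := k) (x : H))
    (S : Module.End k H) (hS : S = HopfAlgebra.antipode (R := k))
    (hSF : ∀ n : ℕ, Submodule.map (S : H →ₗ[k] H) (F n) ≤ F n)
    (p : ℕ) (hp : 0 < p)
    (hann : Submodule.map ((1 - S ^ 2 : Module.End k H) : H →ₗ[k] H) (F p) = ⊥) :
    (∀ u : ℕ, p < u →
      Submodule.map (((1 - S ^ 2) ^ (u - p) : Module.End k H) : H →ₗ[k] H) (F u)
        ≤ primitives k H 1 ∧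
      Submodule.map (((1 + S) * (1 - S ^ 2) ^ (u - p) : Module.End k H) : H →ₗ[k] H) (F u) = ⊥) ∧
    (∀ u : ℕ, p ≤ u →
      Submodule.map (((1 - S ^ 2) ^ (u - p + 1) : Module.End k H) : H →ₗ[k] H) (F u) = ⊥) := by
  have hF0 : ∀ a ∈ F 0, a = counit (R := k) a • (1 : H) := by
    intro a ha
    have := @hconn.1 ⟨a, ha⟩ ⟨counit (R := k) a • (1 : H), Submodule.smul_mem _ _ honeF⟩ (by simp)
    exact congrArg Subtype.val this
  have hstep : ∀ m x, (1 + S) (((1 - S ^ 2 : Module.End k H) ^ m) x) = 0 → ((1 - S ^ 2 : Module.End k H) ^ (m + 1)) x = 0 := by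
    intro m x h
    have : (1 - S ^ 2) ^ (m + 1) = (1 - S) * ((1 + S) * (1 - S ^ 2) ^ m) := by
      rw [← mul_assoc, pow_succ']
      congr 1
      rw [sub_mul, one_mul, mul_add, mul_one, pow_two]
      abel
    rw [this, Module.End.mul_apply, Module.End.mul_apply, h, map_zero]
  have hkill : ∀ {l l' : ℕ} {x : H}, l ≤ l' → ((1 - S ^ 2 : Module.End k H) ^ l) x = 0 →
      ((1 - S ^ 2 : Module.End k H) ^ l') x = 0 := by
    intro l l' x h hx
    rw [← Nat.sub_add_cancel h, pow_add, Module.End.mul_apply, hx, map_zero]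
  have hneg : ∀ m x, 0 < m → ((1 - S ^ 2 : Module.End k H) ^ m) x ∈ primitives k H 1 →
      (1 + S) (((1 - S ^ 2 : Module.End k H) ^ m) x) = 0 := fun m x hm h =>
    add_antipode_eq_zero S hS h (counit_pow_eq_zero S hS hm x)
  have hvan : ∀ n l, 0 < l → n < p + l → ∀ x ∈ F n, ((1 - S ^ 2 : Module.End k H) ^ l) x = 0 := by
    intro n
    induction n using Nat.strong_induction_on with
    | _ n ih =>
      intro l hl hnl x hx
      by_cases hnp : n ≤ p
      · refine hkill (l := 1) hl ?_
        rw [pow_one]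
        have := Submodule.mem_map_of_mem (f := (1 - S ^ 2 : Module.End k H)) (hmono hnp hx)
        rwa [hann, Submodule.mem_bot] at this
      · obtain ⟨m, rfl⟩ := Nat.exists_eq_add_of_le (not_le.mp hnp).le
        have hm : 0 < m := by omega
        exact hkill (l := m + 1) (by omega) (hstep m x (hneg m x hm
          (mem_primitives_of_vanishing F hcomulF hF0 S hS hp hm ih hx)))
  have hprim : ∀ u, p < u → ∀ x ∈ F u, ((1 - S ^ 2 : Module.End k H) ^ (u - p)) x ∈ primitives k H 1 := by
    intro u hu x hx
    refine mem_primitives_of_vanishing F hcomulF hF0 S hS hp (by omega) (fun n _ => hvan n) ?_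
    rwa [Nat.add_sub_cancel' hu.le]
  refine ⟨fun u hu => ⟨?_, ?_⟩, fun u hu => ?_⟩
  · rintro _ ⟨x, hx, rfl⟩
    exact hprim u hu x hx
  · rw [eq_bot_iff]
    rintro _ ⟨x, hx, rfl⟩
    exact hneg _ x (by omega) (hprim u hu x hx)
  · rw [eq_bot_iff]
    rintro _ ⟨x, hx, rfl⟩
    exact hvan u (u - p + 1) (by omega) (by omega) x hx
end

section
/- Let H be a connected filtered k-Hopf algebra with antipode S and filtration (H_{≤0}, H_{≤1}, H_{≤2}, …), and let S² = S ∘ S. Then: (a) for any integer u > 1, we have (id − S²)^{u−1}(H_{≤u}) ⊆ Prim H and ((id + S) ∘ (id − S²)^{u−1})(H_{≤u}) = 0; (b) for any positive integer u, we have (id − S²)^{u}(H_{≤u}) = 0. Here powers denote composition powers. -/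
/-!
Write `f = id - S²`, `T = S²`, `D x = Δ x - x ⊗ 1 - 1 ⊗ x` (so `Prim H = ker D`) and
`p = id - η ε`, the projection onto the augmentation ideal.

The antipode is a coalgebra anti-endomorphism, hence `T` is a coalgebra endomorphism and
`D ∘ f = G ∘ D` with `G = id ⊗ id - T ⊗ T = f ⊗ id + T ⊗ f`. Moreover `D ∘ p = (p ⊗ p) ∘ Δ`, so
`D (f ^ n (p x)) = G ^ n ((p ⊗ p) (Δ x))`.

By strong induction on `u`, `f ^ u (p x) = 0` for all `x ∈ F u`. For `u = 0` this holds because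
connectedness gives `p (F 0) = 0`. For `u > 0`, the operator `G ^ (u - 1)` kills
`(p ⊗ p) (F i ⊗ F (u - i))` for every `i ≤ u`: for `0 < i < u` expand `G` and use
`f ^ i (p (F i)) = 0` and `f ^ (u - i) (p (F (u - i))) = 0`, and for `i = 0, u` use `p (F 0) = 0`.
Hence `y = f ^ (u - 1) (p x)` is primitive, so `S y = - y` and `f y = 0`. Finally `f 1 = 0`, so
`f ^ n (p x) = f ^ n x` as soon as `n > 0`.
-/

open TensorProduct

namespace ConnectedFilteredHopf

open Coalgebra HopfAlgebra WithConv LinearMap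

/-! ### The antipode, primitive elements and the augmentation projection -/

section Hopf

variable {k H : Type*} [CommRing k] [Ring H] [HopfAlgebra k H]

/-- Composing an algebra homomorphism `h` with the antipode gives a left convolution inverse `h ∘ S`
of `h`. -/
lemma comp_antipode_convMul {B : Type*} [Ring B] [Algebra k B] (h : H →ₐ[k] B) :
    toConv (h.toLinearMap ∘ₗ antipode k) * toConv h.toLinearMap = 1 := by
  have := algHom_comp_convMul_distrib h (toConv (antipode k (A := H))) (toConv LinearMap.id)
  rw [antipode_mul_id] at this
  apply WithConv.ext
  refine Eq.trans (Eq.trans ?_ this.symm) ?_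
  · simp
  · ext x
    simp [LinearMap.convOne_def]

/-- The antipode is a coalgebra anti-endomorphism. With `i₁ a = a ⊗ 1` and `i₂ a = 1 ⊗ a`, one has
`Δ = i₁ * i₂` and `(S ⊗ S) ∘ τ ∘ Δ = (i₂ ∘ S) * (i₁ ∘ S)` for the convolution product, so the latter
is a left inverse of `Δ`, whereas `Δ ∘ S` is a right inverse. -/
lemma comul_comp_antipode :
    (comul : H →ₗ[k] H ⊗[k] H) ∘ₗ antipode k =
      TensorProduct.map (antipode k) (antipode k) ∘ₗ (TensorProduct.comm k H H).toLinearMap ∘ₗ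
        comul := by
  let i₁ : H →ₐ[k] H ⊗[k] H := Algebra.TensorProduct.includeLeft
  let i₂ : H →ₐ[k] H ⊗[k] H := Algebra.TensorProduct.includeRight
  have hδ : toConv (comul : H →ₗ[k] H ⊗[k] H) =
      toConv i₁.toLinearMap * toConv i₂.toLinearMap := by
    ext x
    rw [(ℛ k x).convMul_apply]
    simp [i₁, i₂, (ℛ k x).eq]
  have hG : toConv (TensorProduct.map (antipode k) (antipode k) ∘ₗ
      (TensorProduct.comm k H H).toLinearMap ∘ₗ (comul : H →ₗ[k] H ⊗[k] H)) =
      toConv (i₂.toLinearMap ∘ₗ antipode k) * toConv (i₁.toLinearMap ∘ₗ antipode k) := by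
    ext x
    rw [(ℛ k x).convMul_apply]
    change TensorProduct.map (antipode k) (antipode k)
      (TensorProduct.comm k H H (comul (R := k) x)) = _
    conv_lhs => rw [← (ℛ k x).eq]
    simp [i₁, i₂]
  have hl : toConv (TensorProduct.map (antipode k) (antipode k) ∘ₗ
      (TensorProduct.comm k H H).toLinearMap ∘ₗ (comul : H →ₗ[k] H ⊗[k] H)) * toConv comul = 1 := by
    rw [hG, hδ, mul_assoc, ← mul_assoc (toConv (i₁.toLinearMap ∘ₗ antipode k)),
      comp_antipode_convMul, one_mul, comp_antipode_convMul]
  exact (toConv_injective (left_inv_eq_right_inv hl comul_right_inv)).symm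

lemma comul_antipode_sq (x : H) :
    comul (R := k) (antipode k (antipode k x)) =
      TensorProduct.map (antipode k ∘ₗ antipode k) (antipode k ∘ₗ antipode k)
        (comul (R := k) x) := by
  have h (y : H) := LinearMap.congr_fun (comul_comp_antipode (k := k) (H := H)) y
  simp only [LinearMap.comp_apply, LinearEquiv.coe_coe] at h
  rw [h, h]
  generalize comul (R := k) x = t
  induction t using TensorProduct.induction_on with
  | zero => simp
  | tmul a b => simp
  | add a b ha hb => simp only [map_add, ha, hb]

lemma mem_primitives {y : H} :
    y ∈ primitives k H 1 ↔ comul (R := k) y - y ⊗ₜ[k] 1 - 1 ⊗ₜ[k] y = 0 := by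
  simp [primitives]

lemma antipode_of_mem_primitives {y : H} (hy : y ∈ primitives k H 1) : antipode k y = -y := by
  rw [mem_primitives, sub_sub, sub_eq_zero] at hy
  have h1 := mul_antipode_rTensor_comul_apply (R := k) y
  have h2 := congrArg (TensorProduct.lid k H) (rTensor_counit_comul (R := k) y)
  rw [hy] at h1 h2
  simp at h1 h2
  rw [← Algebra.algebraMap_eq_smul_one] at h2
  rw [h2] at h1
  exact eq_neg_of_add_eq_zero_left h1

variable (k H) in
/-- The projection `x ↦ x - ε(x) 1` onto the augmentation ideal along `k · 1`. -/
noncomputable def augProj : Module.End k H :=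
  LinearMap.id - Algebra.linearMap k H ∘ₗ counit

lemma augProj_apply (x : H) : augProj k H x = x - counit (R := k) x • (1 : H) := by
  simp [augProj, Algebra.algebraMap_eq_smul_one]

lemma comul_augProj (x : H) :
    comul (R := k) (augProj k H x) - augProj k H x ⊗ₜ[k] 1 - 1 ⊗ₜ[k] augProj k H x =
      TensorProduct.map (augProj k H) (augProj k H) (comul (R := k) x) := by
  have h1 : TensorProduct.map (Algebra.linearMap k H ∘ₗ counit) LinearMap.id (comul (R := k) x) =
      (1 : H) ⊗ₜ[k] x := by
    have := congrArg (TensorProduct.map (Algebra.linearMap k H) LinearMap.id)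
      (rTensor_counit_comul (R := k) x)
    rw [LinearMap.rTensor, ← LinearMap.comp_apply, ← TensorProduct.map_comp] at this
    simpa using this
  have h2 : TensorProduct.map LinearMap.id (Algebra.linearMap k H ∘ₗ counit) (comul (R := k) x) =
      x ⊗ₜ[k] (1 : H) := by
    have := congrArg (TensorProduct.map LinearMap.id (Algebra.linearMap k H))
      (lTensor_counit_comul (R := k) x)
    rw [LinearMap.lTensor, ← LinearMap.comp_apply, ← TensorProduct.map_comp] at this
    simpa using this
  have h3 : TensorProduct.map (Algebra.linearMap k H ∘ₗ counit) (Algebra.linearMap k H ∘ₗ counit)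
      (comul (R := k) x) = counit (R := k) x • ((1 : H) ⊗ₜ[k] (1 : H)) := by
    have := congrArg (TensorProduct.map LinearMap.id (Algebra.linearMap k H ∘ₗ counit)) h1
    rw [← LinearMap.comp_apply, ← TensorProduct.map_comp] at this
    simpa [Algebra.algebraMap_eq_smul_one] using this
  have h4 : TensorProduct.map (augProj k H) (augProj k H) (comul (R := k) x) =
      comul (R := k) x - x ⊗ₜ[k] (1 : H) - (1 : H) ⊗ₜ[k] x
        + counit (R := k) x • ((1 : H) ⊗ₜ[k] (1 : H)) := by
    rw [← h3, ← h1, ← h2, augProj]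
    generalize comul (R := k) x = t
    induction t using TensorProduct.induction_on with
    | zero => simp
    | tmul a b =>
      simp only [TensorProduct.map_tmul, LinearMap.sub_apply, LinearMap.id_apply,
        TensorProduct.sub_tmul, TensorProduct.tmul_sub]
      abel
    | add a b ha hb =>
      simp only [map_add, ha, hb]
      abel
  rw [h4, augProj_apply]
  simp only [map_sub, map_smul, Bialgebra.comul_one, Algebra.TensorProduct.one_def,
    TensorProduct.sub_tmul, TensorProduct.tmul_sub, TensorProduct.tmul_smul,
    TensorProduct.smul_tmul']
  abel

end Hopf

/-! ### The operator `id ⊗ id - T ⊗ T` -/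

section Tensor

variable {k M : Type*} [CommRing k] [AddCommGroup M] [Module k M]

/-- The operator `id ⊗ id - T ⊗ T = f ⊗ id + T ⊗ f` on `M ⊗ M`, where `f = id - T`. -/
noncomputable def tensorDefect (T : Module.End k M) : Module.End k (M ⊗[k] M) :=
  1 - TensorProduct.map T T

lemma tensorDefect_tmul (T : Module.End k M) (a b : M) :
    tensorDefect T (a ⊗ₜ b) = (1 - T) a ⊗ₜ b + T a ⊗ₜ (1 - T) b := by
  simp [tensorDefect, TensorProduct.sub_tmul, TensorProduct.tmul_sub]

lemma tensorDefect_pow_tmul (T : Module.End k M) (n : ℕ) :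
    ∀ (p q : ℕ) (a b : M), p + q ≤ n + 1 → ((1 - T) ^ p) a = 0 → ((1 - T) ^ q) b = 0 →
      (tensorDefect T ^ n) (a ⊗ₜ[k] b) = 0 := by
  induction n with
  | zero =>
    intro p q a b h ha hb
    obtain rfl | rfl : p = 0 ∨ q = 0 := by omega
    · simp_all
    · simp_all
  | succ n ih =>
    intro p q a b h ha hb
    rcases p with _ | p
    · simp_all
    rcases q with _ | q
    · simp_all
    have hT : ((1 - T) ^ (p + 1)) (T a) = 0 := by
      have hc : Commute ((1 - T) ^ (p + 1)) T :=
        ((Commute.one_left T).sub_left (Commute.refl T)).pow_left _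
      have := LinearMap.congr_fun hc.eq a
      simpa [Module.End.mul_apply, ha] using this
    rw [pow_succ, Module.End.mul_apply] at ha hb
    rw [pow_succ, Module.End.mul_apply, tensorDefect_tmul, map_add,
      ih p (q + 1) _ _ (by omega) ha (by rw [pow_succ, Module.End.mul_apply]; exact hb),
      ih (p + 1) q _ _ (by omega) hT hb, add_zero]

end Tensor

/-! ### Powers of `id - S²` on the filtration -/

section Main

variable {k H : Type*} [CommRing k] [Ring H] [HopfAlgebra k H]

/-- `Δ (f ^ n y) - f ^ n y ⊗ 1 - 1 ⊗ f ^ n y` is obtained from `Δ y - y ⊗ 1 - 1 ⊗ y` by applying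
`(id ⊗ id - S² ⊗ S²) ^ n`, where `f = id - S²`. -/
lemma comul_pow_sub (n : ℕ) (y : H) :
    comul (R := k) (((1 - antipode k ^ 2 : Module.End k H) ^ n) y)
      - ((1 - antipode k ^ 2 : Module.End k H) ^ n) y ⊗ₜ[k] 1
      - 1 ⊗ₜ[k] ((1 - antipode k ^ 2 : Module.End k H) ^ n) y =
    (tensorDefect (antipode k ^ 2 : Module.End k H) ^ n)
      (comul (R := k) y - y ⊗ₜ[k] 1 - 1 ⊗ₜ[k] y) := by
  induction n with
  | zero => simp
  | succ n ih =>
    rw [pow_succ' _ n, pow_succ' _ n, Module.End.mul_apply, Module.End.mul_apply, ← ih]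
    generalize ((1 - antipode k ^ 2 : Module.End k H) ^ n) y = z
    have hΔ := comul_antipode_sq (k := k) z
    have hS2 : (antipode k ^ 2 : Module.End k H) = antipode k ∘ₗ antipode k := pow_two _
    simp only [hS2, tensorDefect, LinearMap.sub_apply, Module.End.one_apply, map_sub,
      LinearMap.comp_apply, hΔ, TensorProduct.map_tmul, antipode_one, TensorProduct.sub_tmul,
      TensorProduct.tmul_sub]

lemma pow_augProj {n : ℕ} (hn : 0 < n) (x : H) :
    ((1 - antipode k ^ 2 : Module.End k H) ^ n) (augProj k H x) =
      ((1 - antipode k ^ 2 : Module.End k H) ^ n) x := by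
  obtain ⟨m, rfl⟩ : ∃ m, n = m + 1 := ⟨n - 1, by omega⟩
  have h1 : (1 - antipode k ^ 2 : Module.End k H) 1 = 0 := by simp [pow_two]
  rw [pow_succ, Module.End.mul_apply, Module.End.mul_apply, augProj_apply, map_sub, map_smul, h1,
    smul_zero, sub_zero]

lemma one_sub_sq_of_mem_primitives {y : H} (hy : y ∈ primitives k H 1) :
    (1 - antipode k ^ 2 : Module.End k H) y = 0 := by
  simp [pow_two, antipode_of_mem_primitives hy]

variable {F : ℕ → Submodule k H}

lemma augProj_eq_zero (honeF : (1 : H) ∈ F 0)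
    (hconn : Function.Bijective fun x : F 0 => counit (R := k) (x : H)) {x : H} (hx : x ∈ F 0) :
    augProj k H x = 0 := by
  have := @hconn.1 ⟨x, hx⟩ (counit (R := k) x • ⟨1, honeF⟩) (by simp)
  rw [augProj_apply, sub_eq_zero]
  exact congrArg Subtype.val this

/-- The inductive step: the vanishing of `f ^ i ∘ p` on `F i` for all `i < n + 1` makes
`f ^ n ∘ p` map `F (n + 1)` into the primitives. -/
lemma primitive_step
    (hcomulF : ∀ n : ℕ, Submodule.map (comul (R := k) (A := H)) (F n) ≤
      ∑ i ∈ Finset.range (n + 1), tmulImage (F i) (F (n - i)))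
    (n : ℕ) (ih : ∀ i < n + 1, ∀ x ∈ F i,
      ((1 - antipode k ^ 2 : Module.End k H) ^ i) (augProj k H x) = 0)
    {x : H} (hx : x ∈ F (n + 1)) :
    ((1 - antipode k ^ 2 : Module.End k H) ^ n) (augProj k H x) ∈ primitives k H 1 := by
  rw [mem_primitives, comul_pow_sub, comul_augProj]
  have key : ∑ i ∈ Finset.range (n + 1 + 1), tmulImage (F i) (F (n + 1 - i)) ≤
      LinearMap.ker ((tensorDefect (antipode k ^ 2 : Module.End k H) ^ n) ∘ₗ
        TensorProduct.map (augProj k H) (augProj k H)) := by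
    refine Finset.sum_induction _ (fun N => N ≤ _) (fun A B hA hB => sup_le hA hB) bot_le ?_
    intro i hi
    rw [Finset.mem_range] at hi
    rintro _ ⟨t, rfl⟩
    induction t using TensorProduct.induction_on with
    | zero => simp
    | add a b ha hb => rw [map_add]; exact add_mem ha hb
    | tmul a b =>
      have h0 (z : H) (hz : z ∈ F 0) : augProj k H z = 0 := by simpa using ih 0 (by omega) z hz
      rw [LinearMap.mem_ker, LinearMap.comp_apply, TensorProduct.mapIncl, TensorProduct.map_tmul,
        TensorProduct.map_tmul]
      -- At the two ends `i = 0` and `i = n + 1` one tensor factor lies in `F 0`.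
      rcases Nat.eq_zero_or_pos i with rfl | hpos
      · simp [h0 _ a.2]
      rcases Nat.lt_or_ge i (n + 1) with hlt | hge
      · exact tensorDefect_pow_tmul _ n i (n + 1 - i) _ _ (by omega) (ih i hlt _ a.2)
          (ih (n + 1 - i) (by omega) _ b.2)
      · have hb : (b : H) ∈ F 0 := by
          have hi0 : F (n + 1 - i) = F 0 := by rw [show n + 1 - i = 0 by omega]
          exact hi0.le b.2
        simp [h0 _ hb]
  exact key (hcomulF (n + 1) ⟨x, hx, rfl⟩)

lemma pow_augProj_eq_zero
    (hcomulF : ∀ n : ℕ, Submodule.map (comul (R := k) (A := H)) (F n) ≤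
      ∑ i ∈ Finset.range (n + 1), tmulImage (F i) (F (n - i)))
    (honeF : (1 : H) ∈ F 0)
    (hconn : Function.Bijective fun x : F 0 => counit (R := k) (x : H)) (u : ℕ) :
    ∀ x ∈ F u, ((1 - antipode k ^ 2 : Module.End k H) ^ u) (augProj k H x) = 0 := by
  induction u using Nat.strong_induction_on with
  | _ u ih =>
    intro x hx
    rcases u with _ | n
    · simpa using augProj_eq_zero honeF hconn hx
    · rw [pow_succ', Module.End.mul_apply]
      exact one_sub_sq_of_mem_primitives (primitive_step hcomulF n ih hx)

end Main

end ConnectedFilteredHopf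

open ConnectedFilteredHopf in
theorem stmt_16 {k H : Type*} [CommRing k] [Ring H] [HopfAlgebra k H]
    (F : ℕ → Submodule k H)
    (hmono : Monotone F)
    (hunion : ∀ x : H, ∃ n, x ∈ F n)
    (hcomulF : ∀ n : ℕ, Submodule.map (Coalgebra.comul (R := k) (A := H)) (F n) ≤
      ∑ i ∈ Finset.range (n + 1), tmulImage (F i) (F (n - i)))
    (hmulF : ∀ i j : ℕ, ∀ a ∈ F i, ∀ b ∈ F j, a * b ∈ F (i + j))
    (honeF : (1 : H) ∈ F 0)
    (hconn : Function.Bijective fun x : F 0 => Coalgebra.counit (R := k) (x : H))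
    (S : Module.End k H) (hS : S = HopfAlgebra.antipode (R := k))
    (hSF : ∀ n : ℕ, Submodule.map (S : H →ₗ[k] H) (F n) ≤ F n)
 :
    (∀ u : ℕ, 1 < u →
      Submodule.map (((1 - S ^ 2) ^ (u - 1) : Module.End k H) : H →ₗ[k] H) (F u)
        ≤ primitives k H 1 ∧
      Submodule.map (((1 + S) * (1 - S ^ 2) ^ (u - 1) : Module.End k H) : H →ₗ[k] H) (F u) = ⊥) ∧
    (∀ u : ℕ, 0 < u →
      Submodule.map (((1 - S ^ 2) ^ u : Module.End k H) : H →ₗ[k] H) (F u) = ⊥) := by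
  subst hS
  have hprim : ∀ u : ℕ, 1 < u → ∀ x ∈ F u,
      ((1 - HopfAlgebra.antipode k ^ 2 : Module.End k H) ^ (u - 1)) x ∈ primitives k H 1 := by
    intro u hu x hx
    rw [← pow_augProj (by omega)]
    refine primitive_step hcomulF (u - 1)
      (fun i _ => pow_augProj_eq_zero hcomulF honeF hconn i) ?_
    rwa [show u - 1 + 1 = u by omega]
  refine ⟨fun u hu => ⟨?_, ?_⟩, fun u hu => ?_⟩
  · rintro _ ⟨x, hx, rfl⟩
    exact hprim u hu x hx
  · rw [eq_bot_iff]
    rintro _ ⟨x, hx, rfl⟩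
    rw [Submodule.mem_bot, Module.End.mul_apply, LinearMap.add_apply, Module.End.one_apply,
      antipode_of_mem_primitives (hprim u hu x hx), add_neg_cancel]
  · rw [eq_bot_iff]
    rintro _ ⟨x, hx, rfl⟩
    rw [Submodule.mem_bot, ← pow_augProj hu]
    exact pow_augProj_eq_zero hcomulF honeF hconn u x hx
end

section
/- Let H be a connected graded k-Hopf algebra with antipode S, and let S² = S ∘ S. Then for any positive integer u, we have (id − S²)^{u−1}(H_u) ⊆ Prim H, ((id + S) ∘ (id − S²)^{u−1})(H_u) = 0, and (id − S²)^{u}(H_u) = 0, where H_u denotes the u-th graded component of H and powers denote composition powers. -/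
/-!
Write `f = id - S²`. The antipode reverses the comultiplication (`comul_antipode`), so `S²` is a
coalgebra endomorphism and `Δ ∘ f = (f ⊗ id + S² ⊗ f) ∘ Δ`. The operators `P = f ⊗ id` and
`Q = S² ⊗ f` commute.

The inclusion `f ^ (u - 1) (G u) ⊆ Prim H` is proved by strong induction on `u`. Every primitive `p`
satisfies `S p = -p`, hence `f p = 0`, so in lower degrees `f ^ i` vanishes on `G i`. For `x ∈ G u`, connectedness
gives `Δ x = x ⊗ 1 + 1 ⊗ x + w` with `w` a sum of terms in `G i ⊗ G (u - i)`, `0 < i < u`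
(`exists_comul_eq`). On such a term `P ^ i` and `Q ^ (u - i)` vanish, so
the binomial theorem gives `(P + Q) ^ (u - 1) w = 0`. As `f 1 = 0`, it follows that
`Δ (f ^ (u - 1) x) = f ^ (u - 1) x ⊗ 1 + 1 ⊗ f ^ (u - 1) x`, so `f ^ (u - 1) x` is primitive
(`pow_mem_primitives`). The two vanishing statements then follow from `S p = -p` for primitive `p`.
-/

open TensorProduct

namespace AntipodeSquare

open Coalgebra HopfAlgebra WithConv

/-! ### The antipode and the comultiplication -/

section Antipode

variable {k H : Type*} [CommRing k] [Ring H] [HopfAlgebra k H]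

/-- The map `x ↦ ∑ S(x₂) ⊗ S(x₁)` is a left convolution inverse of the comultiplication, that is,
`∑ S(x₂) x₃ ⊗ S(x₁) x₄ = ε(x) 1 ⊗ 1`. -/
lemma comul_left_inv :
    toConv ((TensorProduct.map (antipode k) (antipode k)) ∘ₗ
      (TensorProduct.comm k H H).toLinearMap ∘ₗ comul) *
      toConv (comul (R := k) (A := H)) = 1 := by
  apply WithConv.ext
  let A : H ⊗[k] H →ₗ[k] H := LinearMap.mul' k H ∘ₗ (antipode k).rTensor H
  have hA : A ∘ₗ comul = Algebra.linearMap k H ∘ₗ counit := mul_antipode_rTensor_comul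
  -- `Q (a ⊗ (y ⊗ d)) = y ⊗ S(a) d`
  let Q : H ⊗[k] (H ⊗[k] H) →ₗ[k] H ⊗[k] H :=
    A.lTensor H ∘ₗ (TensorProduct.leftComm k H H H).toLinearMap
  have h1 : LinearMap.mul' k (H ⊗[k] H) ∘ₗ TensorProduct.map
      (TensorProduct.map (antipode k) (antipode k) ∘ₗ (TensorProduct.comm k H H).toLinearMap)
      LinearMap.id = Q ∘ₗ (A.rTensor H ∘ₗ (TensorProduct.assoc k H H H).symm.toLinearMap).lTensor H
        ∘ₗ (TensorProduct.assoc k H H (H ⊗[k] H)).toLinearMap := by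
    ext a b c d
    simp [Q, A]
  have h2 : (TensorProduct.assoc k H H (H ⊗[k] H)).toLinearMap ∘ₗ
      TensorProduct.map comul comul ∘ₗ comul (R := k) (A := H) =
      ((comul (R := k) (A := H)).lTensor H ∘ₗ comul).lTensor H ∘ₗ comul := by
    have e : (TensorProduct.assoc k H H (H ⊗[k] H)).toLinearMap ∘ₗ
        (comul (R := k) (A := H)).lTensor (H ⊗[k] H) =
        ((comul (R := k) (A := H)).lTensor H).lTensor H ∘ₗ
          (TensorProduct.assoc k H H H).toLinearMap := by
      ext a b c
      simp
    rw [← LinearMap.lTensor_comp_rTensor, LinearMap.comp_assoc, ← LinearMap.comp_assoc, e,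
      LinearMap.comp_assoc, coassoc, LinearMap.lTensor_comp, LinearMap.comp_assoc]
  have h3 : (A.rTensor H ∘ₗ (TensorProduct.assoc k H H H).symm.toLinearMap) ∘ₗ
      (comul (R := k) (A := H)).lTensor H ∘ₗ comul = TensorProduct.mk k H H 1 := by
    rw [LinearMap.comp_assoc, coassoc_symm, ← LinearMap.comp_assoc, ← LinearMap.rTensor_comp, hA,
      LinearMap.rTensor_comp, LinearMap.comp_assoc, rTensor_counit_comp_comul]
    ext
    simp
  have h4 : Q ∘ₗ (TensorProduct.mk k H H 1).lTensor H = TensorProduct.mk k H H 1 ∘ₗ A := by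
    ext a b
    simp [Q, A]
  calc _ = (LinearMap.mul' k (H ⊗[k] H) ∘ₗ TensorProduct.map
      (TensorProduct.map (antipode k) (antipode k) ∘ₗ (TensorProduct.comm k H H).toLinearMap)
      LinearMap.id) ∘ₗ TensorProduct.map comul comul ∘ₗ comul := by
        change LinearMap.mul' k (H ⊗[k] H) ∘ₗ TensorProduct.map
          ((TensorProduct.map (antipode k) (antipode k) ∘ₗ
            (TensorProduct.comm k H H).toLinearMap) ∘ₗ comul) (LinearMap.id ∘ₗ comul) ∘ₗ comul = _
        rw [TensorProduct.map_comp]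
        rfl
    _ = Q ∘ₗ ((A.rTensor H ∘ₗ (TensorProduct.assoc k H H H).symm.toLinearMap) ∘ₗ
      (comul (R := k) (A := H)).lTensor H ∘ₗ comul).lTensor H ∘ₗ comul := by
        rw [h1]
        change Q ∘ₗ _ ∘ₗ ((TensorProduct.assoc k H H (H ⊗[k] H)).toLinearMap ∘ₗ
          TensorProduct.map comul comul ∘ₗ comul) = _
        rw [h2, LinearMap.lTensor_comp H _ (LinearMap.lTensor H comul ∘ₗ comul)]
        rfl
    _ = TensorProduct.mk k H H 1 ∘ₗ A ∘ₗ comul := by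
        rw [h3, ← LinearMap.comp_assoc, h4, LinearMap.comp_assoc]
    _ = _ := by
        rw [hA]
        ext x
        simp [LinearMap.convOne_def, Algebra.algebraMap_eq_smul_one,
          Algebra.TensorProduct.one_def]

lemma comul_antipode (x : H) : comul (R := k) (antipode k x) =
    TensorProduct.map (antipode k) (antipode k) (TensorProduct.comm k H H (comul x)) := by
  have h := left_inv_eq_right_inv (comul_left_inv (k := k) (H := H))
    (LinearMap.comul_right_inv (R := k) (C := H))
  exact (congr(($h).ofConv x)).symm

lemma comul_antipode_sq (x : H) : comul (R := k) ((antipode k ^ 2 : Module.End k H) x) =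
    TensorProduct.map (antipode k ^ 2 : Module.End k H) (antipode k ^ 2 : Module.End k H)
      (comul x) := by
  have e : TensorProduct.map (antipode k) (antipode k) ∘ₗ
      (TensorProduct.comm k H H).toLinearMap ∘ₗ TensorProduct.map (antipode k) (antipode k) ∘ₗ
      (TensorProduct.comm k H H).toLinearMap = TensorProduct.map
        (antipode k ^ 2 : Module.End k H) (antipode k ^ 2 : Module.End k H) := by
    ext a b
    simp [pow_two]
  rw [← e, pow_two, Module.End.mul_apply, comul_antipode, comul_antipode]
  rfl

lemma antipode_of_mem_primitives {p : H} (hp : p ∈ primitives k H 1) : antipode k p = -p := by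
  have hc : comul (R := k) p = p ⊗ₜ 1 + 1 ⊗ₜ p := by
    have : comul (R := k) p - p ⊗ₜ 1 - 1 ⊗ₜ p = 0 := by simpa [primitives] using hp
    rw [← sub_eq_zero, ← this]
    abel
  have he : counit (R := k) p = 0 := by
    have h := congr(LinearMap.mul' k k (TensorProduct.map counit counit $hc))
    have h' : LinearMap.mul' k k (TensorProduct.map counit counit (comul (R := k) p)) =
        counit (R := k) p := by
      have : TensorProduct.map (counit (R := k) (A := H)) (counit (R := k) (A := H)) =
          (counit (R := k) (A := H)).lTensor k ∘ₗ (counit (R := k) (A := H)).rTensor H := by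
        rw [LinearMap.lTensor_comp_rTensor]
      rw [this, LinearMap.comp_apply, rTensor_counit_comul]
      simp
    rw [h'] at h
    simpa using h
  have h := mul_antipode_rTensor_comul_apply (R := k) p
  rw [hc, he] at h
  simp only [map_add, LinearMap.rTensor_tmul, LinearMap.mul'_apply, mul_one, antipode_one, one_mul,
    map_zero] at h
  exact eq_neg_of_add_eq_zero_left h

lemma one_sub_antipode_sq_of_mem_primitives {p : H} (hp : p ∈ primitives k H 1) :
    (1 - antipode k ^ 2 : Module.End k H) p = 0 := by
  have h := antipode_of_mem_primitives hp
  rw [LinearMap.sub_apply, pow_two, Module.End.mul_apply, h, map_neg, h, Module.End.one_apply,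
    neg_neg, sub_self]

end Antipode

/-! ### Sums of commuting locally nilpotent operators -/

section Binomial

variable {k M : Type*} [CommRing k] [AddCommGroup M] [Module k M]

lemma add_pow_apply_eq_zero {P Q : Module.End k M} (h : Commute P Q) {a b n : ℕ}
    (hn : a + b ≤ n + 1) {w : M} (hP : (P ^ a) w = 0) (hQ : (Q ^ b) w = 0) :
    ((P + Q) ^ n) w = 0 := by
  have hP' : ∀ i, a ≤ i → (P ^ i) w = 0 := fun i hi => by
    rw [← Nat.sub_add_cancel hi, pow_add, Module.End.mul_apply, hP, map_zero]
  have hQ' : ∀ i, b ≤ i → (Q ^ i) w = 0 := fun i hi => by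
    rw [← Nat.sub_add_cancel hi, pow_add, Module.End.mul_apply, hQ, map_zero]
  rw [h.add_pow, LinearMap.sum_apply]
  refine Finset.sum_eq_zero fun i hi => ?_
  have hi' : i ≤ n := Nat.lt_succ_iff.mp (Finset.mem_range.mp hi)
  rw [← Nat.cast_comm, Module.End.mul_apply]
  have : (P ^ i * Q ^ (n - i)) w = 0 := by
    rcases le_or_gt b (n - i) with hb | hb
    · rw [Module.End.mul_apply, hQ' _ hb, map_zero]
    · rw [(h.pow_pow i (n - i)).eq, Module.End.mul_apply, hP' i (by omega), map_zero]
  rw [this, map_zero]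

end Binomial

/-! ### The connected graded case -/

section Graded

variable {k H : Type*} [CommRing k] [Ring H] [HopfAlgebra k H] {G : ℕ → Submodule k H}

lemma eq_counit_smul_one (honeG : (1 : H) ∈ G 0)
    (hconn : Function.Bijective fun x : G 0 => counit (R := k) (x : H)) {x : H} (hx : x ∈ G 0) :
    x = counit (R := k) x • (1 : H) := by
  have := @hconn.1 ⟨x, hx⟩ ⟨_, (G 0).smul_mem (counit (R := k) x) honeG⟩ (by simp)
  exact congrArg Subtype.val this

lemma apply_eq_zero_of_mem_tmulImage {N : Type*} [AddCommGroup N] [Module k N]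
    {A B : Submodule k H} (φ : H ⊗[k] H →ₗ[k] N) (h : ∀ a ∈ A, ∀ b ∈ B, φ (a ⊗ₜ b) = 0)
    {w : H ⊗[k] H} (hw : w ∈ tmulImage A B) : φ w = 0 := by
  obtain ⟨t, rfl⟩ := hw
  induction t with
  | zero => simp
  | add x y hx hy => simp [hx, hy]
  | tmul a b => exact h a a.2 b b.2

lemma apply_eq_zero_of_mem_sum_tmulImage {N : Type*} [AddCommGroup N] [Module k N]
    {n : ℕ} (φ : H ⊗[k] H →ₗ[k] N)
    (h : ∀ i < n, ∀ a ∈ G (i + 1), ∀ b ∈ G (n - i), φ (a ⊗ₜ b) = 0) {w : H ⊗[k] H}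
    (hw : w ∈ ∑ i ∈ Finset.range n, tmulImage (G (i + 1)) (G (n - i))) : φ w = 0 := by
  have hle : ∑ i ∈ Finset.range n, tmulImage (G (i + 1)) (G (n - i)) ≤ LinearMap.ker φ := by
    refine Finset.sum_induction _ (· ≤ LinearMap.ker φ) (fun _ _ => sup_le) bot_le
      fun i hi v hv => ?_
    exact apply_eq_zero_of_mem_tmulImage φ (h i (Finset.mem_range.mp hi)) hv
  exact hle hw

/-- In the connected graded setting, `Δ x = x ⊗ 1 + 1 ⊗ x + w` for `x` of degree `n + 1`, with `w`
in the part of `H ⊗ H` where both tensor factors have positive degree. -/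
lemma exists_comul_eq (honeG : (1 : H) ∈ G 0)
    (hcomulG : ∀ n : ℕ, Submodule.map (Coalgebra.comul (R := k) (A := H)) (G n) ≤
      ∑ i ∈ Finset.range (n + 1), tmulImage (G i) (G (n - i)))
    (hcounitG : ∀ n : ℕ, 0 < n → ∀ x ∈ G n, Coalgebra.counit (R := k) x = 0)
    (hconn : Function.Bijective fun x : G 0 => counit (R := k) (x : H))
    {n : ℕ} {x : H} (hx : x ∈ G (n + 1)) :
    ∃ w ∈ ∑ i ∈ Finset.range n, tmulImage (G (i + 1)) (G (n - i)),
      comul (R := k) x = x ⊗ₜ 1 + 1 ⊗ₜ x + w := by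
  have hmem := hcomulG (n + 1) ⟨x, hx, rfl⟩
  rw [Finset.sum_range_succ, Finset.sum_range_succ'] at hmem
  simp only [Nat.add_sub_add_right, Nat.sub_self, Nat.sub_zero, Submodule.add_eq_sup] at hmem
  obtain ⟨s, hs, r, hr, hsr⟩ := Submodule.mem_sup.mp hmem
  obtain ⟨w, hw, l, hl, hwl⟩ := Submodule.mem_sup.mp hs
  let L : H ⊗[k] H →ₗ[k] H := (TensorProduct.lid k H).toLinearMap ∘ₗ counit.rTensor H
  let R : H ⊗[k] H →ₗ[k] H := (TensorProduct.rid k H).toLinearMap ∘ₗ counit.lTensor H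
  have hLx : L (comul x) = x := by simp [L]
  have hRx : R (comul x) = x := by simp [R]
  have hLw : L w = 0 := apply_eq_zero_of_mem_sum_tmulImage L
    (fun i _ a ha b _ => by simp [L, hcounitG _ i.succ_pos a ha]) hw
  have hRw : R w = 0 := apply_eq_zero_of_mem_sum_tmulImage R
    (fun i hi a _ b hb => by simp [R, hcounitG _ (Nat.sub_pos_of_lt hi) b hb]) hw
  have hLr : L r = 0 := apply_eq_zero_of_mem_tmulImage L
    (fun a ha b _ => by simp [L, hcounitG _ n.succ_pos a ha]) hr
  have hRl : R l = 0 := apply_eq_zero_of_mem_tmulImage R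
    (fun a _ b hb => by simp [R, hcounitG _ n.succ_pos b hb]) hl
  have hl' : l = 1 ⊗ₜ L l := sub_eq_zero.mp <| apply_eq_zero_of_mem_tmulImage
    (LinearMap.id - TensorProduct.mk k H H 1 ∘ₗ L) (fun a ha b _ => by
      have : a ⊗ₜ[k] b = 1 ⊗ₜ (counit (R := k) a • b) := by
        rw [← TensorProduct.smul_tmul, ← eq_counit_smul_one honeG hconn ha]
      simp [L, this]) hl
  have hr' : r = R r ⊗ₜ 1 := sub_eq_zero.mp <| apply_eq_zero_of_mem_tmulImage
    (LinearMap.id - (TensorProduct.mk k H H).flip 1 ∘ₗ R) (fun a _ b hb => by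
      have : a ⊗ₜ[k] b = (counit (R := k) b • a) ⊗ₜ 1 := by
        rw [TensorProduct.smul_tmul, ← eq_counit_smul_one honeG hconn hb]
      simp [R, this, TensorProduct.smul_tmul']) hr
  have hL : L l = x := by
    rw [← hLx, ← hsr, ← hwl]
    simp [hLw, hLr]
  have hR : R r = x := by
    rw [← hRx, ← hsr, ← hwl]
    simp [hRw, hRl]
  refine ⟨w, hw, ?_⟩
  rw [← hsr, ← hwl, hl', hr', hL, hR]
  abel

/-- The twisted Leibniz rule for `f = id - S²` and its powers:
`Δ ∘ f ^ n = (f ⊗ id + S² ⊗ f) ^ n ∘ Δ`. -/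
lemma comul_pow_apply (n : ℕ) (x : H) :
    comul (R := k) (((1 - antipode k ^ 2 : Module.End k H) ^ n) x) =
      (((TensorProduct.map (1 - antipode k ^ 2 : Module.End k H) (1 : Module.End k H) +
        TensorProduct.map (antipode k ^ 2 : Module.End k H) (1 - antipode k ^ 2 : Module.End k H) :
        Module.End k (H ⊗[k] H))) ^ n) (comul x) := by
  induction n generalizing x with
  | zero => simp
  | succ n ih =>
    rw [pow_succ _ n, Module.End.mul_apply, ih, pow_succ _ n, Module.End.mul_apply]
    congr 1
    have e : TensorProduct.map (1 - antipode k ^ 2 : Module.End k H) (1 : Module.End k H) +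
        TensorProduct.map (antipode k ^ 2 : Module.End k H) (1 - antipode k ^ 2 : Module.End k H) =
        LinearMap.id - TensorProduct.map (antipode k ^ 2 : Module.End k H)
          (antipode k ^ 2 : Module.End k H) := by
      ext a b
      simp [TensorProduct.sub_tmul, TensorProduct.tmul_sub]
    rw [LinearMap.sub_apply, map_sub, comul_antipode_sq, Module.End.one_apply, e]
    rfl

lemma pow_mem_primitives (honeG : (1 : H) ∈ G 0)
    (hcomulG : ∀ n : ℕ, Submodule.map (Coalgebra.comul (R := k) (A := H)) (G n) ≤
      ∑ i ∈ Finset.range (n + 1), tmulImage (G i) (G (n - i)))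
    (hcounitG : ∀ n : ℕ, 0 < n → ∀ x ∈ G n, Coalgebra.counit (R := k) x = 0)
    (hconn : Function.Bijective fun x : G 0 => counit (R := k) (x : H)) (n : ℕ) :
    ∀ x ∈ G (n + 1), ((1 - antipode k ^ 2 : Module.End k H) ^ n) x ∈ primitives k H 1 := by
  induction n using Nat.strong_induction_on with
  | _ n ih =>
  intro x hx
  set f : Module.End k H := 1 - antipode k ^ 2 with hf
  have hkill : ∀ m < n, ∀ y ∈ G (m + 1), (f ^ (m + 1)) y = 0 := fun m hm y hy => by
    rw [pow_succ', Module.End.mul_apply, hf, one_sub_antipode_sq_of_mem_primitives (ih m hm y hy)]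
  have hf1 : f 1 = 0 := by simp [hf, pow_two]
  set P : Module.End k (H ⊗[k] H) := TensorProduct.map f (1 : Module.End k H) with hP
  set Q : Module.End k (H ⊗[k] H) := TensorProduct.map (antipode k ^ 2 : Module.End k H) f with hQ
  have hcomm : Commute P Q := by
    have hc : Commute f (antipode k ^ 2 : Module.End k H) :=
      (Commute.one_left _).sub_left (Commute.refl _)
    change P * Q = Q * P
    rw [hP, hQ, ← TensorProduct.map_mul, ← TensorProduct.map_mul, hc.eq, one_mul, mul_one]
  have hr : ∀ (m : ℕ) (y : H), ((P + Q) ^ m) (y ⊗ₜ 1) = (f ^ m) y ⊗ₜ 1 := fun m => by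
    induction m with
    | zero => simp
    | succ m ihm => intro y; simp [pow_succ, hP, hQ, hf1, ← ihm]
  have hl : ∀ (m : ℕ) (y : H), ((P + Q) ^ m) (1 ⊗ₜ y) = 1 ⊗ₜ (f ^ m) y := fun m => by
    induction m with
    | zero => simp
    | succ m ihm => intro y; simp [pow_succ, hP, hQ, hf1, ← ihm, pow_two (antipode k)]
  obtain ⟨w, hw, hxw⟩ := exists_comul_eq honeG hcomulG hcounitG hconn hx
  have hw0 : ((P + Q) ^ n) w = 0 := by
    refine apply_eq_zero_of_mem_sum_tmulImage _ (fun i hi a ha b hb => ?_) hw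
    refine add_pow_apply_eq_zero hcomm (a := i + 1) (b := n - i) (by omega) ?_ ?_
    · rw [hP, TensorProduct.map_pow, TensorProduct.map_tmul, hkill i hi a ha,
        TensorProduct.zero_tmul]
    · obtain ⟨m, hm⟩ : ∃ m, n - i = m + 1 := ⟨n - i - 1, by omega⟩
      rw [hm] at hb ⊢
      rw [hQ, TensorProduct.map_pow, TensorProduct.map_tmul, hkill m (by omega) b hb,
        TensorProduct.tmul_zero]
  have hΔ := comul_pow_apply (k := k) n x
  rw [← hf, ← hP, ← hQ, hxw, map_add, map_add, hr, hl, hw0] at hΔ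
  simp [primitives, hΔ]

end Graded

end AntipodeSquare

theorem stmt_17 {k H : Type*} [CommRing k] [Ring H] [HopfAlgebra k H]
    (G : ℕ → Submodule k H)
    (hdirect : DirectSum.IsInternal G)
    (hmulG : ∀ i j : ℕ, ∀ a ∈ G i, ∀ b ∈ G j, a * b ∈ G (i + j))
    (honeG : (1 : H) ∈ G 0)
    (hcomulG : ∀ n : ℕ, Submodule.map (Coalgebra.comul (R := k) (A := H)) (G n) ≤
      ∑ i ∈ Finset.range (n + 1), tmulImage (G i) (G (n - i)))
    (hcounitG : ∀ n : ℕ, 0 < n → ∀ x ∈ G n, Coalgebra.counit (R := k) x = 0)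
    (hconn : Function.Bijective fun x : G 0 => Coalgebra.counit (R := k) (x : H))
    (S : Module.End k H) (hS : S = HopfAlgebra.antipode (R := k))
    (u : ℕ) (hu : 0 < u) :
    Submodule.map (((1 - S ^ 2) ^ (u - 1) : Module.End k H) : H →ₗ[k] H) (G u)
      ≤ primitives k H 1 ∧
    Submodule.map (((1 + S) * (1 - S ^ 2) ^ (u - 1) : Module.End k H) : H →ₗ[k] H) (G u) = ⊥ ∧
    Submodule.map (((1 - S ^ 2) ^ u : Module.End k H) : H →ₗ[k] H) (G u) = ⊥ := by
  subst hS
  obtain ⟨n, rfl⟩ : ∃ n, u = n + 1 := ⟨u - 1, by omega⟩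
  rw [Nat.add_sub_cancel]
  have hprim := AntipodeSquare.pow_mem_primitives honeG hcomulG hcounitG hconn n
  refine ⟨?_, ?_, ?_⟩
  · rintro _ ⟨x, hx, rfl⟩
    exact hprim x hx
  · rw [eq_bot_iff]
    rintro _ ⟨x, hx, rfl⟩
    have h := AntipodeSquare.antipode_of_mem_primitives (hprim x hx)
    rw [Submodule.mem_bot, Module.End.mul_apply, LinearMap.add_apply, h, Module.End.one_apply,
      add_neg_cancel]
  · rw [eq_bot_iff]
    rintro _ ⟨x, hx, rfl⟩
    rw [Submodule.mem_bot, pow_succ', Module.End.mul_apply,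
      AntipodeSquare.one_sub_antipode_sq_of_mem_primitives (hprim x hx)]
end
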